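/- Let λ have block structure k. The map φ from the set of faces of the Gelfand–Cetlin polytope P_λ to the set of faces of the ladder diagram Γ_k is a bijection, with inverse ψ given as follows: for a face γ of Γ_k, ψ(γ) is the set of points x ∈ P_λ such that x_{i,j} = x_{i,j+1} whenever ((i−1,j),(i,j)) is not an edge of γ, and x_{i,j} = x_{i+1,j} whenever ((i,j−1),(i,j)) is not an edge of γ. -/

import Mathlib

open Classical

noncomputable section

/-- Partial sums of the (0-indexed) sequence `k`: `nseq k i = k 0 + ⋯ + k (i-1)`;
so `nseq k i` is the paper's `n_i` for the sequence `(k_1, …, k_s) = (k 0, …, k (s-1))`. -/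
def nseq (k : ℕ → ℕ) (i : ℕ) : ℕ := ∑ j ∈ Finset.range i, k j

/-- The set of terminal vertices `T_k = {(n_i, n - n_i) : 0 ≤ i ≤ s}` of the ladder diagram. -/
def terminals (s : ℕ) (k : ℕ → ℕ) : Set (ℕ × ℕ) :=
  {v | ∃ i ≤ s, v = (nseq k i, nseq k s - nseq k i)}

/-- The vertex set of the ladder diagram `Γ_k`. -/
def ladderV (s : ℕ) (k : ℕ → ℕ) : Set (ℕ × ℕ) :=
  {v | ∃ t ∈ terminals s k, v.1 ≤ t.1 ∧ v.2 ≤ t.2}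

/-- A unit grid step: one step to the right or one step up. -/
def gridStep (v w : ℕ × ℕ) : Prop :=
  w = (v.1 + 1, v.2) ∨ w = (v.1, v.2 + 1)

/-- The edge set of the ladder diagram `Γ_k`. -/
def ladderE (s : ℕ) (k : ℕ → ℕ) : Set ((ℕ × ℕ) × (ℕ × ℕ)) :=
  {e | e.1 ∈ ladderV s k ∧ e.2 ∈ ladderV s k ∧ gridStep e.1 e.2}

/-- A combinatorial (directed) graph in the grid `ℤ_{≥0} × ℤ_{≥0}`,
given by a set of vertices and a set of edges. -/
@[ext] structure LGraph where
  V : Set (ℕ × ℕ)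
  E : Set ((ℕ × ℕ) × (ℕ × ℕ))

/-- Subgraph inclusion order on grid graphs. -/
instance : PartialOrder LGraph where
  le γ γ' := γ.V ⊆ γ'.V ∧ γ.E ⊆ γ'.E
  le_refl γ := ⟨subset_rfl, subset_rfl⟩
  le_trans a b c h h' := ⟨h.1.trans h'.1, h.2.trans h'.2⟩
  le_antisymm a b h h' := LGraph.ext (subset_antisymm h.1 h'.1) (subset_antisymm h.2 h'.2)

/-- The ladder diagram `Γ_k` as a grid graph. -/
def ladder (s : ℕ) (k : ℕ → ℕ) : LGraph :=
  ⟨ladderV s k, ladderE s k⟩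

/-- A positive path: (the graph of) a shortest path in the ladder diagram `Γ_k`
from the origin `(0,0)` to a terminal vertex. -/
def IsPositivePath (s : ℕ) (k : ℕ → ℕ) (p : LGraph) : Prop :=
  ∃ (m : ℕ) (f : ℕ → ℕ × ℕ),
    f 0 = (0, 0) ∧ f m ∈ terminals s k ∧
    (∀ i < m, gridStep (f i) (f (i + 1))) ∧
    (∀ i ≤ m, f i ∈ ladderV s k) ∧
    p.V = {v | ∃ i ≤ m, v = f i} ∧
    p.E = {e | ∃ i < m, e = (f i, f (i + 1))}

/-- A face of the ladder diagram `Γ_k`: a subgraph which contains all terminal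
vertices and is a union of positive paths. -/
def IsLadderFace (s : ℕ) (k : ℕ → ℕ) (γ : LGraph) : Prop :=
  terminals s k ⊆ γ.V ∧
  ∃ P : Set LGraph, (∀ p ∈ P, IsPositivePath s k p) ∧
    γ.V = ⋃ p ∈ P, LGraph.V p ∧ γ.E = ⋃ p ∈ P, LGraph.E p

/-- The dimension (first Betti number) of a face of a ladder diagram:
`|E(γ)| - |V(γ)| + 1`. -/
def ldim (γ : LGraph) : ℤ :=
  (γ.E.ncard : ℤ) - (γ.V.ncard : ℤ) + 1

/-- The index set `I = {(i,j) : i,j ≥ 1, i+j ≤ n}` of the coordinates of a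
Gelfand–Cetlin pattern. -/
def GCIdx (n : ℕ) : Set (ℕ × ℕ) := {p | 1 ≤ p.1 ∧ 1 ≤ p.2 ∧ p.1 + p.2 ≤ n}

/-- The entries of a Gelfand–Cetlin pattern `x`, extended by the boundary
condition `x_{i, n+1-i} = λ_i`. -/
def gcEntry (n : ℕ) (lam : ℕ → ℝ) (x : GCIdx n → ℝ) (p : ℕ × ℕ) : ℝ :=
  if h : p ∈ GCIdx n then x ⟨p, h⟩ else lam p.1

/-- The Gelfand–Cetlin polytope `P_λ`: the set of points `(x_{i,j})_{(i,j) ∈ I}`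
with `x_{i,j+1} ≥ x_{i,j} ≥ x_{i+1,j}` for all `(i,j) ∈ I`, where
`x_{i,n+1-i} = λ_i`. -/
def GCPoly (n : ℕ) (lam : ℕ → ℝ) : Set (GCIdx n → ℝ) :=
  {x | ∀ i j : ℕ, (i, j) ∈ GCIdx n →
    gcEntry n lam x (i, j) ≤ gcEntry n lam x (i, j + 1) ∧
    gcEntry n lam x (i + 1, j) ≤ gcEntry n lam x (i, j)}

/-- The subset of `P_λ` obtained by turning the inequalities
`x_{i,j+1} ≥ x_{i,j}` for `(i,j) ∈ SH` and `x_{i,j} ≥ x_{i+1,j}` for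
`(i,j) ∈ SV` into equalities. -/
def GCFaceOf (n : ℕ) (lam : ℕ → ℝ) (SH SV : Set (ℕ × ℕ)) : Set (GCIdx n → ℝ) :=
  {x | x ∈ GCPoly n lam ∧
    (∀ p ∈ SH, gcEntry n lam x (p.1, p.2 + 1) = gcEntry n lam x p) ∧
    (∀ p ∈ SV, gcEntry n lam x p = gcEntry n lam x (p.1 + 1, p.2))}

/-- A face of the GC polytope: a nonempty solution set of the system obtained
by replacing some of the defining inequalities by equalities. -/
def IsGCFace (n : ℕ) (lam : ℕ → ℝ) (F : Set (GCIdx n → ℝ)) : Prop :=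
  F.Nonempty ∧ ∃ SH SV : Set (ℕ × ℕ), SH ⊆ GCIdx n ∧ SV ⊆ GCIdx n ∧
    F = GCFaceOf n lam SH SV

/-- The dimension of (a face of) the GC polytope: the dimension of its affine span. -/
def GCdim (n : ℕ) (F : Set (GCIdx n → ℝ)) : ℕ :=
  Module.finrank ℝ (affineSpan ℝ F).direction

/-- `lam` (1-indexed) is weakly decreasing with block structure `k`: it is
constant on each block `(n_{i-1}, n_i]` and strictly decreases between
consecutive blocks. -/
def HasBlockStructure (s : ℕ) (k : ℕ → ℕ) (lam : ℕ → ℝ) : Prop :=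
  (∀ i < s, ∀ a b : ℕ, nseq k i < a → a ≤ b → b ≤ nseq k (i + 1) → lam a = lam b) ∧
  (∀ i : ℕ, 1 ≤ i → i < s → lam (nseq k i + 1) < lam (nseq k i))

/-- The edge set of the graph `φ(F)` associated to a subset `F` of the GC polytope. -/
def phiE (n : ℕ) (lam : ℕ → ℝ) (F : Set (GCIdx n → ℝ)) :
    Set ((ℕ × ℕ) × (ℕ × ℕ)) :=
  {e | (∃ i < n, e = ((0, i), (0, i + 1)) ∨ e = ((i, 0), (i + 1, 0))) ∨
    (∃ i j : ℕ, (i, j) ∈ GCIdx n ∧ e = ((i - 1, j), (i, j)) ∧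
      ∃ x ∈ F, gcEntry n lam x (i, j) < gcEntry n lam x (i, j + 1)) ∨
    (∃ i j : ℕ, (i, j) ∈ GCIdx n ∧ e = ((i, j - 1), (i, j)) ∧
      ∃ x ∈ F, gcEntry n lam x (i + 1, j) < gcEntry n lam x (i, j))}

/-- The graph `φ(F)`: its edges are given by `phiE` and its vertices are the
endpoints of its edges. -/
def phiGC (n : ℕ) (lam : ℕ → ℝ) (F : Set (GCIdx n → ℝ)) : LGraph where
  V := {v | ∃ e ∈ phiE n lam F, v = e.1 ∨ v = e.2}
  E := phiE n lam F

/-- The map `ψ`: for a subgraph `γ`, the set of points of `P_λ` where the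
inequalities corresponding to the missing edges of `γ` become equalities. -/
def psiGC (n : ℕ) (lam : ℕ → ℝ) (γ : LGraph) : Set (GCIdx n → ℝ) :=
  {x | x ∈ GCPoly n lam ∧ ∀ i j : ℕ, (i, j) ∈ GCIdx n →
    (((i - 1, j), (i, j)) ∉ γ.E → gcEntry n lam x (i, j) = gcEntry n lam x (i, j + 1)) ∧
    (((i, j - 1), (i, j)) ∉ γ.E → gcEntry n lam x (i, j) = gcEntry n lam x (i + 1, j))}
/-- The recursively defined point `x̄` of the proof of Lemma 2.6 (bijectivity):
`x̄_{i,j} = λ_i` if `i + j = n + 1`, and for `i + j ≤ n` it is determined from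
`x̄_{i,j+1}` and `x̄_{i+1,j}` according to which of the two edges
`((i-1,j),(i,j))`, `((i,j-1),(i,j))` belong to `E`. -/
def barX (n : ℕ) (lam : ℕ → ℝ) (E : Set ((ℕ × ℕ) × (ℕ × ℕ))) : ℕ → ℕ → ℝ
  | i, j =>
    if h1 : n + 1 ≤ i + j then lam i
    else if h2 : ((i - 1, j), (i, j)) ∈ E then
      if h3 : ((i, j - 1), (i, j)) ∈ E then
        (barX n lam E i (j + 1) + barX n lam E (i + 1) j) / 2
      else barX n lam E (i + 1) j
    else barX n lam E i (j + 1)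
  termination_by i j => n + 1 - (i + j)
  decreasing_by all_goals omega

/-- `α, β : ℕ → ℕ` encode an element
`w = ((α_1,β_1),…,(α_{s-1},β_{s-1})) ∈ W_{s-1}`, with the conventions
`α_0 = 0`, `β_0 = 1`, `α_s = 1`, `β_s = 0`. -/
def IsW (s : ℕ) (α β : ℕ → ℕ) : Prop :=
  (∀ i : ℕ, 1 ≤ i → i < s →
    (α i, β i) = (1, 0) ∨ (α i, β i) = (0, 1) ∨ (α i, β i) = (1, 1)) ∧
  α 0 = 0 ∧ β 0 = 1 ∧ α s = 1 ∧ β s = 0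

/-- The edge set of the subgraph `g_w` of `Γ_k`: the horizontal edge into the
terminal vertex `v_i` when `α_i = 1` and the vertical edge into `v_i` when
`β_i = 1`. -/
def gwE (s : ℕ) (k α β : ℕ → ℕ) : Set ((ℕ × ℕ) × (ℕ × ℕ)) :=
  {e | ∃ i ≤ s,
    (α i = 1 ∧
      e = ((nseq k i - 1, nseq k s - nseq k i), (nseq k i, nseq k s - nseq k i))) ∨
    (β i = 1 ∧
      e = ((nseq k i, nseq k s - nseq k i - 1), (nseq k i, nseq k s - nseq k i)))}

/-- The subgraph `g_w` of `Γ_k`. -/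
def gwGraph (s : ℕ) (k α β : ℕ → ℕ) : LGraph where
  V := {v | ∃ e ∈ gwE s k α β, v = e.1 ∨ v = e.2}
  E := gwE s k α β

/-- The interleaved sequence `r_w(k) * w̃` of length `2s - 1` (0-indexed):
entry `2j` is `k''_{j+1} = k_{j+1} + 1 - α_{j+1} - β_j` and entry `2j + 1` is
`w̃_{j+1} = α_{j+1} β_{j+1}`. -/
def rstar (s : ℕ) (k α β : ℕ → ℕ) (t : ℕ) : ℕ :=
  if t % 2 = 0 then k (t / 2) + 1 - α (t / 2 + 1) - β (t / 2)
  else α (t / 2 + 1) * β (t / 2 + 1)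

/-- `α`-value of one of the three symbols `(1,0), (0,1), (1,1)`,
encoded as `0, 1, 2 : Fin 3` respectively. -/
def aW3 (c : Fin 3) : ℕ := if c = 1 then 0 else 1

/-- `β`-value of one of the three symbols `(1,0), (0,1), (1,1)`,
encoded as `0, 1, 2 : Fin 3` respectively. -/
def bW3 (c : Fin 3) : ℕ := if c = 0 then 0 else 1

/-- The function `α` of the element of `W_{s-1}` encoded by
`c : Fin (s-1) → Fin 3` (with the conventions `α_0 = 0`, `α_s = 1`). -/
def alph (s : ℕ) (c : Fin (s - 1) → Fin 3) (i : ℕ) : ℕ :=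
  if i = 0 then 0 else if h : i - 1 < s - 1 then aW3 (c ⟨i - 1, h⟩) else 1

/-- The function `β` of the element of `W_{s-1}` encoded by
`c : Fin (s-1) → Fin 3` (with the conventions `β_0 = 1`, `β_s = 0`). -/
def bet (s : ℕ) (c : Fin (s - 1) → Fin 3) (i : ℕ) : ℕ :=
  if i = 0 then 1 else if h : i - 1 < s - 1 then bW3 (c ⟨i - 1, h⟩) else 0

/-- The interleaved sequence `r_w(k) * w̃` (of length `2s - 1`, 0-indexed) for
the element `w ∈ W_{s-1}` encoded by `c`. -/
def newk (s : ℕ) (c : Fin (s - 1) → Fin 3) (k : ℕ → ℕ) (t : ℕ) : ℕ :=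
  if t % 2 = 0 then k (t / 2) + 1 - alph s c (t / 2 + 1) - bet s c (t / 2)
  else alph s c (t / 2 + 1) * bet s c (t / 2 + 1)

/-- `|w| = Σ_{i=1}^{s-1} α_i β_i` for the element `w ∈ W_{s-1}` encoded by `c`. -/
def wsize (s : ℕ) (c : Fin (s - 1) → Fin 3) : ℕ :=
  ∑ j ∈ Finset.range (s - 1), alph s c (j + 1) * bet s c (j + 1)

/-- The subgraph `g_w` of `Γ_k` for the element `w ∈ W_{s-1}` encoded by `c`. -/
def gwGraph3 (s : ℕ) (k : ℕ → ℕ) (c : Fin (s - 1) → Fin 3) : LGraph :=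
  gwGraph s k (alph s c) (bet s c)

/-- Union of two grid graphs (union of vertex sets and of edge sets). -/
def ugraph (γ δ : LGraph) : LGraph := ⟨γ.V ∪ δ.V, γ.E ∪ δ.E⟩

/-- The generating function `F_k(t) = Σ_{γ face of Γ_k} t^{dim γ}` of the
`f`-vector of the ladder diagram `Γ_k`, as a formal power series in `t`:
the coefficient of `t^d` is the number of faces of `Γ_k` of dimension `d`. -/
def fpol (s : ℕ) (k : ℕ → ℕ) : PowerSeries ℤ :=
  PowerSeries.mk fun d =>
    (Set.ncard {γ : LGraph | IsLadderFace s k γ ∧ ldim γ = (d : ℤ)} : ℤ)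

/-- The operator `Π_{i=1}^{s-1} (∂/∂x_i + ∂/∂x_{i+1} + t ∂/∂y_i)` applied to a
polynomial in the variables `x_1, x_2, … , y_1, y_2, …` (the variable `x_{i+1}`
is `Sum.inl i` and `y_{i+1}` is `Sum.inr i`) over `ℚ[t]`. -/
def Lfold (s : ℕ) (f : MvPolynomial (ℕ ⊕ ℕ) (Polynomial ℚ)) :
    MvPolynomial (ℕ ⊕ ℕ) (Polynomial ℚ) :=
  (List.range (s - 1)).foldl
    (fun g i =>
      MvPolynomial.pderiv (Sum.inl i) g + MvPolynomial.pderiv (Sum.inl (i + 1)) g +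
        (Polynomial.X : Polynomial ℚ) • MvPolynomial.pderiv (Sum.inr i) g) f

/-- The operator `D_w = Π_{i=1}^{s-1} (∂/∂x_i)^{1-α_i} (∂/∂x_{i+1})^{1-β_i}
(t ∂/∂y_i)^{α_i β_i}` for the element `w ∈ W_{s-1}` encoded by
`c : Fin (s-1) → Fin 3` (`0 ↦ (1,0)`, `1 ↦ (0,1)`, `2 ↦ (1,1)`). -/
def DfoldC (s : ℕ) (c : Fin (s - 1) → Fin 3)
    (f : MvPolynomial (ℕ ⊕ ℕ) (Polynomial ℚ)) : MvPolynomial (ℕ ⊕ ℕ) (Polynomial ℚ) :=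
  (List.finRange (s - 1)).foldl
    (fun g i =>
      if c i = 0 then MvPolynomial.pderiv (Sum.inl ((i : ℕ) + 1)) g
      else if c i = 1 then MvPolynomial.pderiv (Sum.inl (i : ℕ)) g
      else (Polynomial.X : Polynomial ℚ) • MvPolynomial.pderiv (Sum.inr (i : ℕ)) g) f

/-- The operator `D_w` for the element `w ∈ W_{s-1}` encoded by `α, β : ℕ → ℕ`. -/
def DfoldW (s : ℕ) (α β : ℕ → ℕ)
    (f : MvPolynomial (ℕ ⊕ ℕ) (Polynomial ℚ)) : MvPolynomial (ℕ ⊕ ℕ) (Polynomial ℚ) :=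
  (List.range (s - 1)).foldl
    (fun g j =>
      if α (j + 1) = 1 ∧ β (j + 1) = 1 then
        (Polynomial.X : Polynomial ℚ) • MvPolynomial.pderiv (Sum.inr j) g
      else if α (j + 1) = 1 then MvPolynomial.pderiv (Sum.inl (j + 1)) g
      else MvPolynomial.pderiv (Sum.inl j) g) f

/-- Substitution of `0` for all the variables `y_j = Sum.inr j`. -/
def setYzero :
    MvPolynomial (ℕ ⊕ ℕ) (Polynomial ℚ) →ₐ[Polynomial ℚ] MvPolynomial (ℕ ⊕ ℕ) (Polynomial ℚ) :=
  MvPolynomial.aeval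
    (Sum.elim (fun i => MvPolynomial.X (Sum.inl i)) fun _ => (0 : MvPolynomial (ℕ ⊕ ℕ) (Polynomial ℚ)))
end


/-- Local characterization of the edge sets of faces of the ladder diagram. -/
structure LocFace (s : ℕ) (k : ℕ → ℕ) (E : Set ((ℕ × ℕ) × (ℕ × ℕ))) : Prop where
  step : ∀ u v, (u, v) ∈ E → gridStep u v ∧ v.1 + v.2 ≤ nseq k s
  axis : ∀ i < nseq k s, ((0, i), (0, i + 1)) ∈ E ∧ ((i, 0), (i + 1, 0)) ∈ E
  bal : ∀ i j, 1 ≤ i → 1 ≤ j → i + j < nseq k s →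
    ((∃ u, (u, (i, j)) ∈ E) ↔ ∃ w, ((i, j), w) ∈ E)
  term : ∀ i j, 1 ≤ i → 1 ≤ j → i + j = nseq k s →
    ((∃ u, (u, (i, j)) ∈ E) ↔ (i, j) ∈ terminals s k)

theorem nseq_succ (k : ℕ → ℕ) (i : ℕ) : nseq k (i + 1) = nseq k i + k i := by
  simp [nseq, Finset.sum_range_succ]

theorem nseq_zero (k : ℕ → ℕ) : nseq k 0 = 0 := by simp [nseq]

theorem nseq_le (k : ℕ → ℕ) {i j : ℕ} (h : i ≤ j) : nseq k i ≤ nseq k j := by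
  induction j, h using Nat.le_induction with
  | base => exact le_rfl
  | succ m _ ih => rw [nseq_succ]; omega

theorem nseq_pos (s : ℕ) (hs : 1 ≤ s) (k : ℕ → ℕ) (hk : ∀ i < s, 0 < k i) :
    0 < nseq k s := by
  have h1 := nseq_le k hs
  have h2 := nseq_succ k 0
  have := hk 0 (by omega)
  simp only [Nat.zero_add] at h2
  omega

theorem exists_block (k : ℕ → ℕ) (s i : ℕ) (h : i < nseq k s) :
    ∃ t < s, nseq k t ≤ i ∧ i < nseq k (t + 1) := by
  induction s with
  | zero => simp [nseq_zero] at h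
  | succ m ih =>
    by_cases h' : i < nseq k m
    · obtain ⟨t, ht, h2⟩ := ih h'
      exact ⟨t, by omega, h2⟩
    · exact ⟨m, by omega, by omega, h⟩

theorem lam_facts (s : ℕ) (k : ℕ → ℕ)
    (lam : ℕ → ℝ) (hlam : HasBlockStructure s k lam) (i j : ℕ) (hi : 1 ≤ i) (hj : 1 ≤ j)
    (hij : i + j = nseq k s) :
    lam (i + 1) ≤ lam i ∧ (lam (i + 1) < lam i ↔ (i, j) ∈ terminals s k) := by
  obtain ⟨t, ht, h1, h2⟩ := exists_block k s i (by omega)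
  rcases Nat.eq_or_lt_of_le h1 with h | h
  · have ht0 : 1 ≤ t := by
      rcases Nat.eq_zero_or_pos t with h0 | h0
      · subst h0; rw [nseq_zero] at h; omega
      · exact h0
    have := hlam.2 t ht0 ht
    rw [h] at this
    refine ⟨this.le, fun _ => ⟨t, ht.le, ?_⟩, fun _ => this⟩
    rw [h, Prod.mk.injEq]; omega
  · have := hlam.1 t ht i (i + 1) h (by omega) h2
    refine ⟨this.ge, fun h' => absurd h' (by simp [this]), ?_⟩
    rintro ⟨r, hr, he⟩
    rw [Prod.mk.injEq] at he
    exfalso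
    rcases Nat.lt_or_ge t r with hh | hh
    · have := nseq_le k (show t + 1 ≤ r from hh); omega
    · have := nseq_le k hh; omega

theorem term_sum {s : ℕ} {k : ℕ → ℕ} {v : ℕ × ℕ} (h : v ∈ terminals s k) :
    v.1 + v.2 = nseq k s := by
  obtain ⟨i, hi, rfl⟩ := h
  have := nseq_le k hi
  simp only; omega

theorem path_sum {m : ℕ} {f : ℕ → ℕ × ℕ} (h0 : f 0 = (0, 0))
    (hst : ∀ i < m, gridStep (f i) (f (i + 1))) (i : ℕ) (hi : i ≤ m) :
    (f i).1 + (f i).2 = i := by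
  induction i with
  | zero => simp [h0]
  | succ l ih =>
    have := ih (by omega)
    rcases hst l (by omega) with h | h <;> rw [h] <;> simp only <;> omega

theorem path_mono {m : ℕ} {f : ℕ → ℕ × ℕ}
    (hst : ∀ i < m, gridStep (f i) (f (i + 1))) (i j : ℕ) (hij : i ≤ j) (hj : j ≤ m) :
    (f i).1 ≤ (f j).1 ∧ (f i).2 ≤ (f j).2 := by
  induction j, hij using Nat.le_induction with
  | base => exact ⟨le_rfl, le_rfl⟩
  | succ l _ ih =>
    have := ih (by omega)
    rcases hst l (by omega) with h | h <;> rw [h] <;> simp only <;> omega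

/-- Everything needed about the paths making up a face. -/
theorem face_paths {s : ℕ} {k : ℕ → ℕ} {γ : LGraph} (hγ : IsLadderFace s k γ) :
    (∀ v ∈ γ.V, ∃ f : ℕ → ℕ × ℕ, (∃ l ≤ nseq k s, v = f l) ∧
      f 0 = (0, 0) ∧ f (nseq k s) ∈ terminals s k ∧
      (∀ i < nseq k s, gridStep (f i) (f (i + 1))) ∧
      (∀ i ≤ nseq k s, f i ∈ γ.V) ∧ (∀ i < nseq k s, (f i, f (i + 1)) ∈ γ.E)) ∧
    (∀ e ∈ γ.E, ∃ f : ℕ → ℕ × ℕ, (∃ l < nseq k s, e = (f l, f (l + 1))) ∧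
      f 0 = (0, 0) ∧ f (nseq k s) ∈ terminals s k ∧
      (∀ i < nseq k s, gridStep (f i) (f (i + 1))) ∧
      (∀ i ≤ nseq k s, f i ∈ γ.V) ∧ (∀ i < nseq k s, (f i, f (i + 1)) ∈ γ.E)) := by
  obtain ⟨_, P, hP, hV, hE⟩ := hγ
  have key : ∀ p ∈ P, ∃ f : ℕ → ℕ × ℕ,
      p.V = {v | ∃ i ≤ nseq k s, v = f i} ∧
      p.E = {e | ∃ i < nseq k s, e = (f i, f (i + 1))} ∧
      f 0 = (0, 0) ∧ f (nseq k s) ∈ terminals s k ∧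
      (∀ i < nseq k s, gridStep (f i) (f (i + 1))) ∧
      (∀ i ≤ nseq k s, f i ∈ γ.V) ∧ (∀ i < nseq k s, (f i, f (i + 1)) ∈ γ.E) := by
    intro p hp
    obtain ⟨m, f, h0, hm, hst, hl, hpV, hpE⟩ := hP p hp
    have hmn : m = nseq k s := by
      rw [← path_sum h0 hst m le_rfl, term_sum hm]
    subst hmn
    refine ⟨f, hpV, hpE, h0, hm, hst, ?_, ?_⟩
    · intro i hi
      rw [hV]
      exact Set.mem_biUnion hp (by rw [hpV]; exact ⟨i, hi, rfl⟩)
    · intro i hi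
      rw [hE]
      exact Set.mem_biUnion hp (by rw [hpE]; exact ⟨i, hi, rfl⟩)
  constructor
  · intro v hv
    rw [hV] at hv
    simp only [Set.mem_iUnion] at hv
    obtain ⟨p, hp, hv⟩ := hv
    obtain ⟨f, h1, _, h3⟩ := key p hp
    rw [h1] at hv
    exact ⟨f, hv, h3⟩
  · intro v hv
    rw [hE] at hv
    simp only [Set.mem_iUnion] at hv
    obtain ⟨p, hp, hv⟩ := hv
    obtain ⟨f, _, h1, h3⟩ := key p hp
    rw [h1] at hv
    exact ⟨f, hv, h3⟩

theorem face_loc {s : ℕ} {k : ℕ → ℕ} (hn : 0 < nseq k s) {γ : LGraph}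
    (hγ : IsLadderFace s k γ) :
    LocFace s k γ.E ∧ γ.V = {v | ∃ e ∈ γ.E, v = e.1 ∨ v = e.2} := by
  obtain ⟨hPV, hPE⟩ := face_paths hγ
  refine ⟨⟨?_, ?_, ?_, ?_⟩, ?_⟩
  · intro u v he
    obtain ⟨f, ⟨l, hl, hlf⟩, h0, ht, hst, -, -⟩ := hPE _ he
    rw [Prod.mk.injEq] at hlf
    obtain ⟨rfl, rfl⟩ := hlf
    refine ⟨hst l hl, ?_⟩
    rw [path_sum h0 hst (l + 1) hl]; omega
  · intro i hi
    have t1 : ((0, nseq k s) : ℕ × ℕ) ∈ terminals s k :=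
      ⟨0, by omega, by simp [nseq_zero]⟩
    have t2 : ((nseq k s, 0) : ℕ × ℕ) ∈ terminals s k :=
      ⟨s, le_rfl, by simp⟩
    constructor
    · obtain ⟨f, ⟨l, hl, hlf⟩, h0, ht, hst, -, hE⟩ := hPV _ (hγ.1 t1)
      have hs := path_sum h0 hst l hl
      have hln : l = nseq k s := by rw [← hs, ← hlf]; simp
      subst hln
      have e : ∀ j ≤ nseq k s, f j = (0, j) := by
        intro j hj
        have h1 := path_sum h0 hst j hj
        have h2 := (path_mono hst j _ hj le_rfl).1
        rw [← hlf] at h2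
        simp only at h2
        ext <;> simp only <;> omega
      have := hE i hi
      rwa [e i (by omega), e (i + 1) (by omega)] at this
    · obtain ⟨f, ⟨l, hl, hlf⟩, h0, ht, hst, -, hE⟩ := hPV _ (hγ.1 t2)
      have hs := path_sum h0 hst l hl
      have hln : l = nseq k s := by rw [← hs, ← hlf]; simp
      subst hln
      have e : ∀ j ≤ nseq k s, f j = (j, 0) := by
        intro j hj
        have h1 := path_sum h0 hst j hj
        have h2 := (path_mono hst j _ hj le_rfl).2
        rw [← hlf] at h2
        simp only at h2
        ext <;> simp only <;> omega
      have := hE i hi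
      rwa [e i (by omega), e (i + 1) (by omega)] at this
  · intro i j hi hj hij
    constructor
    · rintro ⟨u, he⟩
      obtain ⟨f, ⟨l, hl, hlf⟩, h0, ht, hst, -, hE⟩ := hPE _ he
      rw [Prod.mk.injEq] at hlf
      have hs := path_sum h0 hst (l + 1) hl
      rw [← hlf.2] at hs
      simp only at hs
      have := hE (l + 1) (by omega)
      rw [← hlf.2] at this
      exact ⟨_, this⟩
    · rintro ⟨u, he⟩
      obtain ⟨f, ⟨l, hl, hlf⟩, h0, ht, hst, -, hE⟩ := hPE _ he
      rw [Prod.mk.injEq] at hlf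
      have hs := path_sum h0 hst l hl.le
      rw [← hlf.1] at hs
      simp only at hs
      have := hE (l - 1) (by omega)
      rw [show l - 1 + 1 = l by omega, ← hlf.1] at this
      exact ⟨_, this⟩
  · intro i j hi hj hij
    constructor
    · rintro ⟨u, he⟩
      obtain ⟨f, ⟨l, hl, hlf⟩, h0, ht, hst, -, hE⟩ := hPE _ he
      rw [Prod.mk.injEq] at hlf
      have hs := path_sum h0 hst (l + 1) hl
      rw [← hlf.2] at hs
      simp only at hs
      rw [← hij, hs, ← hlf.2] at ht
      exact ht
    · intro ht'
      obtain ⟨f, ⟨l, hl, hlf⟩, h0, ht, hst, -, hE⟩ := hPV _ (hγ.1 ht')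
      have hs := path_sum h0 hst l hl
      rw [← hlf] at hs
      simp only at hs
      have := hE (l - 1) (by omega)
      rw [show l - 1 + 1 = l by omega, ← hlf] at this
      exact ⟨_, this⟩
  · ext v
    constructor
    · intro hv
      obtain ⟨f, ⟨l, hl, rfl⟩, h0, ht, hst, -, hE⟩ := hPV _ hv
      rcases Nat.eq_or_lt_of_le hl with h | h
      · refine ⟨_, hE (l - 1) (by omega), Or.inr ?_⟩
        simp only [show l - 1 + 1 = l by omega]
      · exact ⟨_, hE l h, Or.inl rfl⟩
    · rintro ⟨e, he, hv⟩
      obtain ⟨f, ⟨l, hl, rfl⟩, h0, ht, hst, hV, hE⟩ := hPE _ he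
      rcases hv with rfl | rfl
      · exact hV l hl.le
      · exact hV (l + 1) hl

theorem step_sum {u v : ℕ × ℕ} (h : gridStep u v) : v.1 + v.2 = u.1 + u.2 + 1 := by
  rcases h with h | h <;> rw [h] <;> simp only <;> omega

/-- Endpoints of edges. -/
def endpts (E : Set ((ℕ × ℕ) × (ℕ × ℕ))) : Set (ℕ × ℕ) := {v | ∃ e ∈ E, v = e.1 ∨ v = e.2}

theorem loc_sum {s : ℕ} {k : ℕ → ℕ} {E : Set ((ℕ × ℕ) × (ℕ × ℕ))} (hE : LocFace s k E)
    {v : ℕ × ℕ} (hv : v ∈ endpts E) : v.1 + v.2 ≤ nseq k s := by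
  obtain ⟨⟨a, b⟩, he, h⟩ := hv
  have h1 := hE.step _ _ he
  have h2 := step_sum h1.1
  rcases h with rfl | rfl
  · omega
  · exact h1.2

theorem loc_in {s : ℕ} {k : ℕ → ℕ} {E : Set ((ℕ × ℕ) × (ℕ × ℕ))} (hE : LocFace s k E)
    {v : ℕ × ℕ} (hv : v ∈ endpts E) (h0 : 0 < v.1 + v.2) : ∃ u, (u, v) ∈ E := by
  have hs := loc_sum hE hv
  obtain ⟨a, b⟩ := v
  simp only at h0 hs
  rcases Nat.eq_zero_or_pos a with rfl | ha
  · have := (hE.axis (b - 1) (by omega)).1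
    rw [show b - 1 + 1 = b by omega] at this
    exact ⟨_, this⟩
  rcases Nat.eq_zero_or_pos b with rfl | hb
  · have := (hE.axis (a - 1) (by omega)).2
    rw [show a - 1 + 1 = a by omega] at this
    exact ⟨_, this⟩
  obtain ⟨⟨x, y⟩, he, h⟩ := hv
  simp only at h
  rcases h with rfl | rfl
  · have h1 := hE.step _ _ he
    have h2 := step_sum h1.1
    simp only at h2
    exact (hE.bal a b ha hb (by omega)).2 ⟨_, he⟩
  · exact ⟨_, he⟩

theorem loc_out {s : ℕ} {k : ℕ → ℕ} {E : Set ((ℕ × ℕ) × (ℕ × ℕ))} (hE : LocFace s k E)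
    {v : ℕ × ℕ} (hv : v ∈ endpts E) (h0 : v.1 + v.2 < nseq k s) : ∃ w, (v, w) ∈ E := by
  obtain ⟨a, b⟩ := v
  simp only at h0
  rcases Nat.eq_zero_or_pos a with rfl | ha
  · exact ⟨_, (hE.axis b (by omega)).1⟩
  rcases Nat.eq_zero_or_pos b with rfl | hb
  · exact ⟨_, (hE.axis a (by omega)).2⟩
  obtain ⟨⟨x, y⟩, he, h⟩ := hv
  simp only at h
  rcases h with rfl | rfl
  · exact ⟨_, he⟩
  · exact (hE.bal a b ha hb (by omega)).1 ⟨_, he⟩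

theorem loc_fwd {s : ℕ} {k : ℕ → ℕ} {E : Set ((ℕ × ℕ) × (ℕ × ℕ))} (hE : LocFace s k E)
    (d : ℕ) : ∀ v ∈ endpts E, v.1 + v.2 + d = nseq k s →
    ∃ f : ℕ → ℕ × ℕ, f (v.1 + v.2) = v ∧
      ∀ i, v.1 + v.2 ≤ i → i < nseq k s → (f i, f (i + 1)) ∈ E := by
  induction d with
  | zero => intro v hv h; exact ⟨fun _ => v, rfl, fun i h1 h2 => by omega⟩
  | succ d ih =>
    intro v hv h
    obtain ⟨w, hw⟩ := loc_out hE hv (by omega)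
    have hsum := step_sum (hE.step _ _ hw).1
    obtain ⟨f, h1, h2⟩ := ih w ⟨_, hw, Or.inr rfl⟩ (by omega)
    refine ⟨fun i => if i ≤ v.1 + v.2 then v else f i, by simp, ?_⟩
    intro i hi hi'
    rcases Nat.eq_or_lt_of_le hi with hh | hh
    · subst hh
      simp only [le_refl, if_true]
      rw [if_neg (by omega), ← hsum, h1]
      exact hw
    · simp only
      rw [if_neg (by omega), if_neg (by omega)]
      exact h2 i (by omega) hi'

theorem loc_bwd {s : ℕ} {k : ℕ → ℕ} {E : Set ((ℕ × ℕ) × (ℕ × ℕ))} (hE : LocFace s k E)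
    (l : ℕ) : ∀ v ∈ endpts E, v.1 + v.2 = l →
    ∃ f : ℕ → ℕ × ℕ, f 0 = (0, 0) ∧ f l = v ∧ ∀ i < l, (f i, f (i + 1)) ∈ E := by
  induction l with
  | zero =>
    intro v hv h
    refine ⟨fun _ => v, ?_, rfl, fun i h1 => by omega⟩
    ext <;> simp only <;> omega
  | succ l ih =>
    intro v hv h
    obtain ⟨w, hw⟩ := loc_in hE hv (by omega)
    have hsum := step_sum (hE.step _ _ hw).1
    obtain ⟨f, h0, h1, h2⟩ := ih w ⟨_, hw, Or.inl rfl⟩ (by omega)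
    refine ⟨fun i => if i ≤ l then f i else v, by simp [h0], by simp, ?_⟩
    intro i hi
    simp only
    rcases Nat.eq_or_lt_of_le (Nat.lt_succ_iff.1 hi) with hh | hh
    · subst hh
      rw [if_pos le_rfl, if_neg (by omega), h1]
      exact hw
    · rw [if_pos (by omega), if_pos (by omega)]
      exact h2 i hh

theorem loc_term {s : ℕ} {k : ℕ → ℕ} (hn : 0 < nseq k s)
    {E : Set ((ℕ × ℕ) × (ℕ × ℕ))} (hE : LocFace s k E)
    {v : ℕ × ℕ} (hv : v ∈ endpts E) (h0 : v.1 + v.2 = nseq k s) : v ∈ terminals s k := by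
  obtain ⟨u, hu⟩ := loc_in hE hv (by omega)
  obtain ⟨a, b⟩ := v
  simp only at h0
  rcases Nat.eq_zero_or_pos a with rfl | ha
  · refine ⟨0, by omega, ?_⟩
    rw [nseq_zero, Prod.mk.injEq]; omega
  rcases Nat.eq_zero_or_pos b with rfl | hb
  · refine ⟨s, le_rfl, ?_⟩
    rw [Prod.mk.injEq]; omega
  exact (hE.term a b ha hb h0).1 ⟨u, hu⟩

theorem term_loc {s : ℕ} {k : ℕ → ℕ} (hn : 0 < nseq k s)
    {E : Set ((ℕ × ℕ) × (ℕ × ℕ))} (hE : LocFace s k E)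
    {v : ℕ × ℕ} (hv : v ∈ terminals s k) : v ∈ endpts E := by
  have h0 := term_sum hv
  obtain ⟨a, b⟩ := v
  simp only at h0
  rcases Nat.eq_zero_or_pos a with rfl | ha
  · have := (hE.axis (b - 1) (by omega)).1
    rw [show b - 1 + 1 = b by omega] at this
    exact ⟨_, this, Or.inr rfl⟩
  rcases Nat.eq_zero_or_pos b with rfl | hb
  · have := (hE.axis (a - 1) (by omega)).2
    rw [show a - 1 + 1 = a by omega] at this
    exact ⟨_, this, Or.inr rfl⟩
  obtain ⟨u, hu⟩ := (hE.term a b ha hb h0).2 hv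
  exact ⟨_, hu, Or.inr rfl⟩

theorem loc_path {s : ℕ} {k : ℕ → ℕ} (hn : 0 < nseq k s)
    {E : Set ((ℕ × ℕ) × (ℕ × ℕ))} (hE : LocFace s k E) {u v : ℕ × ℕ} (he : (u, v) ∈ E) :
    ∃ p : LGraph, IsPositivePath s k p ∧ p.V ⊆ endpts E ∧ p.E ⊆ E ∧ (u, v) ∈ p.E ∧
      u ∈ p.V ∧ v ∈ p.V := by
  have hst := hE.step _ _ he
  have hsum := step_sum hst.1
  have hv : v ∈ endpts E := ⟨_, he, Or.inr rfl⟩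
  obtain ⟨f, f0, fl, hf⟩ := loc_bwd hE _ u ⟨_, he, Or.inl rfl⟩ rfl
  obtain ⟨g, gl, hg⟩ := loc_fwd hE (nseq k s - (v.1 + v.2)) v hv (by omega)
  set l := u.1 + u.2 with hl
  rw [hsum] at gl hg
  let q : ℕ → ℕ × ℕ := fun i => if i ≤ l then f i else g i
  have q1 : ∀ i ≤ l, q i = f i := fun i hi => if_pos hi
  have q2 : ∀ i, l + 1 ≤ i → q i = g i := fun i hi => if_neg (by omega)
  have qE : ∀ i < nseq k s, (q i, q (i + 1)) ∈ E := by
    intro i hi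
    rcases lt_trichotomy i l with h | h | h
    · rw [q1 i (by omega), q1 (i + 1) (by omega)]; exact hf i h
    · rw [q1 i (by omega), q2 (i + 1) (by omega), h, fl, gl]; exact he
    · rw [q2 i (by omega), q2 (i + 1) (by omega)]; exact hg i h hi
  have q0 : q 0 = (0, 0) := by rw [q1 0 (by omega), f0]
  have qst : ∀ i < nseq k s, gridStep (q i) (q (i + 1)) := fun i hi => (hE.step _ _ (qE i hi)).1
  have qV : ∀ i ≤ nseq k s, q i ∈ endpts E := by
    intro i hi
    rcases Nat.eq_zero_or_pos i with h | h
    · subst h; exact ⟨_, qE 0 hn, Or.inl rfl⟩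
    · have := qE (i - 1) (by omega)
      rw [show i - 1 + 1 = i by omega] at this
      exact ⟨_, this, Or.inr rfl⟩
  have qt : q (nseq k s) ∈ terminals s k :=
    loc_term hn hE (qV _ le_rfl) (path_sum q0 qst _ le_rfl)
  have hql : q l = u := by rw [q1 l le_rfl, fl]
  have hql' : q (l + 1) = v := by rw [q2 (l + 1) le_rfl, gl]
  refine ⟨⟨{v | ∃ i ≤ nseq k s, v = q i}, {e | ∃ i < nseq k s, e = (q i, q (i + 1))}⟩,
    ⟨nseq k s, q, q0, qt, qst, ?_, rfl, rfl⟩, ?_, ?_, ?_, ?_, ?_⟩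
  · intro i hi
    exact ⟨_, qt, path_mono qst i _ hi le_rfl⟩
  · rintro _ ⟨i, hi, rfl⟩; exact qV i hi
  · rintro _ ⟨i, hi, rfl⟩; exact qE i hi
  · exact ⟨l, by omega, by rw [hql, hql']⟩
  · exact ⟨l, by omega, hql.symm⟩
  · exact ⟨l + 1, by omega, hql'.symm⟩

theorem loc_face {s : ℕ} {k : ℕ → ℕ} (hn : 0 < nseq k s)
    {E : Set ((ℕ × ℕ) × (ℕ × ℕ))} (hE : LocFace s k E) :
    IsLadderFace s k ⟨endpts E, E⟩ := by
  refine ⟨fun v hv => term_loc hn hE hv,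
    {p | IsPositivePath s k p ∧ p.V ⊆ endpts E ∧ p.E ⊆ E}, fun p hp => hp.1, ?_, ?_⟩
  · ext v
    simp only [Set.mem_iUnion]
    constructor
    · rintro ⟨⟨a, b⟩, he, hv⟩
      obtain ⟨p, h1, h2, h3, h4, h5, h6⟩ := loc_path hn hE he
      refine ⟨p, ⟨h1, h2, h3⟩, ?_⟩
      rcases hv with rfl | rfl
      · exact h5
      · exact h6
    · rintro ⟨p, hp, hv⟩; exact hp.2.1 hv
  · ext ⟨a, b⟩
    simp only [Set.mem_iUnion]
    constructor
    · intro he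
      obtain ⟨p, h1, h2, h3, h4, h5, h6⟩ := loc_path hn hE he
      exact ⟨p, ⟨h1, h2, h3⟩, h4⟩
    · rintro ⟨p, hp, hv⟩; exact hp.2.2 hv

theorem memH {n : ℕ} {lam : ℕ → ℝ} {F : Set (GCIdx n → ℝ)} {i j : ℕ} (h : (i, j) ∈ GCIdx n) :
    ((i - 1, j), (i, j)) ∈ phiE n lam F ↔
      ∃ x ∈ F, gcEntry n lam x (i, j) < gcEntry n lam x (i, j + 1) := by
  obtain ⟨h1, h2, h3⟩ := id h
  simp only at h1 h2 h3
  constructor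
  · rintro (⟨a, ha, he | he⟩ | ⟨a, b, hab, he, hx⟩ | ⟨a, b, hab, he, hx⟩)
    · simp only [Prod.mk.injEq] at he; omega
    · simp only [Prod.mk.injEq] at he; omega
    · simp only [Prod.mk.injEq] at he
      obtain ⟨-, rfl, rfl⟩ := he
      exact hx
    · have := hab.2.1
      simp only [Prod.mk.injEq] at he this; omega
  · intro hx
    exact Or.inr (Or.inl ⟨i, j, h, rfl, hx⟩)

theorem memV {n : ℕ} {lam : ℕ → ℝ} {F : Set (GCIdx n → ℝ)} {i j : ℕ} (h : (i, j) ∈ GCIdx n) :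
    ((i, j - 1), (i, j)) ∈ phiE n lam F ↔
      ∃ x ∈ F, gcEntry n lam x (i + 1, j) < gcEntry n lam x (i, j) := by
  obtain ⟨h1, h2, h3⟩ := id h
  simp only at h1 h2 h3
  constructor
  · rintro (⟨a, ha, he | he⟩ | ⟨a, b, hab, he, hx⟩ | ⟨a, b, hab, he, hx⟩)
    · simp only [Prod.mk.injEq] at he; omega
    · simp only [Prod.mk.injEq] at he; omega
    · have := hab.1
      simp only [Prod.mk.injEq] at he this; omega
    · simp only [Prod.mk.injEq] at he
      obtain ⟨-, rfl, rfl⟩ := he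
      exact hx
  · intro hx
    exact Or.inr (Or.inr ⟨i, j, h, rfl, hx⟩)

theorem phi_step {n : ℕ} {lam : ℕ → ℝ} {F : Set (GCIdx n → ℝ)} (u v : ℕ × ℕ)
    (h : (u, v) ∈ phiE n lam F) : gridStep u v ∧ v.1 + v.2 ≤ n := by
  rcases h with ⟨a, ha, he | he⟩ | ⟨a, b, ⟨h1, h2, h3⟩, he, hx⟩ | ⟨a, b, ⟨h1, h2, h3⟩, he, hx⟩
  · rw [Prod.mk.injEq] at he
    obtain ⟨rfl, rfl⟩ := he
    exact ⟨Or.inr rfl, by simp only; omega⟩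
  · rw [Prod.mk.injEq] at he
    obtain ⟨rfl, rfl⟩ := he
    exact ⟨Or.inl rfl, by simp only; omega⟩
  · rw [Prod.mk.injEq] at he
    obtain ⟨rfl, rfl⟩ := he
    simp only at h1
    refine ⟨Or.inl ?_, h3⟩
    simp only [show a - 1 + 1 = a by omega]
  · rw [Prod.mk.injEq] at he
    obtain ⟨rfl, rfl⟩ := he
    simp only at h2
    refine ⟨Or.inr ?_, h3⟩
    simp only [show b - 1 + 1 = b by omega]

theorem in_iff {E : Set ((ℕ × ℕ) × (ℕ × ℕ))} (hE : ∀ u v, (u, v) ∈ E → gridStep u v)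
    {i j : ℕ} (hi : 1 ≤ i) (hj : 1 ≤ j) :
    (∃ u, (u, (i, j)) ∈ E) ↔ ((i - 1, j), (i, j)) ∈ E ∨ ((i, j - 1), (i, j)) ∈ E := by
  constructor
  · rintro ⟨⟨a, b⟩, h⟩
    have := hE _ _ h
    simp only [gridStep, Prod.mk.injEq] at this
    rcases this with ⟨rfl, rfl⟩ | ⟨rfl, rfl⟩
    · left; simpa using h
    · right; simpa using h
  · rintro (h | h) <;> exact ⟨_, h⟩

theorem out_iff {E : Set ((ℕ × ℕ) × (ℕ × ℕ))} (hE : ∀ u v, (u, v) ∈ E → gridStep u v)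
    {i j : ℕ} :
    (∃ u, ((i, j), u) ∈ E) ↔ ((i, j), (i + 1, j)) ∈ E ∨ ((i, j), (i, j + 1)) ∈ E := by
  constructor
  · rintro ⟨⟨a, b⟩, h⟩
    have := hE _ _ h
    simp only [gridStep, Prod.mk.injEq] at this
    rcases this with ⟨rfl, rfl⟩ | ⟨rfl, rfl⟩
    · left; simpa using h
    · right; simpa using h
  · rintro (h | h) <;> exact ⟨_, h⟩

theorem gcEntry_bdry {n : ℕ} {lam : ℕ → ℝ} {x : GCIdx n → ℝ} {i j : ℕ} (h : n < i + j) :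
    gcEntry n lam x (i, j) = lam i := by
  rw [gcEntry, dif_neg]
  rintro ⟨_, _, h3⟩
  simp only at h3; omega

theorem phi_loc {s : ℕ} {k : ℕ → ℕ} {lam : ℕ → ℝ} (hlam : HasBlockStructure s k lam)
    {F : Set (GCIdx (nseq k s) → ℝ)} (hF : F.Nonempty) (hFP : F ⊆ GCPoly (nseq k s) lam) :
    LocFace s k (phiE (nseq k s) lam F) := by
  have hst := fun u v h => (phi_step (n := nseq k s) (lam := lam) (F := F) u v h).1
  have hin : ∀ i j, 1 ≤ i → 1 ≤ j → i + j ≤ nseq k s →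
      ((∃ u, (u, (i, j)) ∈ phiE (nseq k s) lam F) ↔
      ∃ x ∈ F, gcEntry (nseq k s) lam x (i + 1, j) < gcEntry (nseq k s) lam x (i, j + 1)) := by
    intro i j hi hj hij
    have hg : (i, j) ∈ GCIdx (nseq k s) := ⟨hi, hj, hij⟩
    rw [in_iff hst hi hj, memH hg, memV hg]
    constructor
    · rintro (⟨x, hx, h⟩ | ⟨x, hx, h⟩) <;> refine ⟨x, hx, ?_⟩ <;>
        have := hFP hx i j hg <;> linarith
    · rintro ⟨x, hx, h⟩
      rcases lt_or_ge (gcEntry (nseq k s) lam x (i, j)) (gcEntry (nseq k s) lam x (i, j + 1))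
        with h' | h'
      · exact Or.inl ⟨x, hx, h'⟩
      · exact Or.inr ⟨x, hx, by linarith⟩
  refine ⟨phi_step, ?_, ?_, ?_⟩
  · intro i hi
    exact ⟨Or.inl ⟨i, hi, Or.inl rfl⟩, Or.inl ⟨i, hi, Or.inr rfl⟩⟩
  · intro i j hi hj hij
    have g1 : (i + 1, j) ∈ GCIdx (nseq k s) := ⟨by simp, hj, by simp only; omega⟩
    have g2 : (i, j + 1) ∈ GCIdx (nseq k s) := ⟨hi, by simp, by simp only; omega⟩
    have m1 := memH (lam := lam) (F := F) g1
    have m2 := memV (lam := lam) (F := F) g2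
    simp only [Nat.add_sub_cancel] at m1 m2
    rw [hin i j hi hj hij.le, out_iff hst, m1, m2]
    constructor
    · rintro ⟨x, hx, h⟩
      rcases lt_or_ge (gcEntry (nseq k s) lam x (i + 1, j))
        (gcEntry (nseq k s) lam x (i + 1, j + 1)) with h' | h'
      · exact Or.inl ⟨x, hx, h'⟩
      · exact Or.inr ⟨x, hx, by linarith⟩
    · rintro (⟨x, hx, h⟩ | ⟨x, hx, h⟩) <;> refine ⟨x, hx, ?_⟩ <;>
        have := hFP hx _ _ g1 <;> have := hFP hx _ _ g2 <;> linarith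
  · intro i j hi hj hij
    rw [hin i j hi hj hij.le, ← (lam_facts s k lam hlam i j hi hj hij).2]
    obtain ⟨y, hy⟩ := hF
    constructor
    · rintro ⟨x, hx, h⟩
      rwa [gcEntry_bdry (by omega), gcEntry_bdry (by omega)] at h
    · intro h
      refine ⟨y, hy, ?_⟩
      rwa [gcEntry_bdry (by omega), gcEntry_bdry (by omega)]

theorem psi_phi {n : ℕ} {lam : ℕ → ℝ} {F : Set (GCIdx n → ℝ)} (hF : IsGCFace n lam F) :
    psiGC n lam (phiGC n lam F) = F := by
  obtain ⟨_, SH, SV, hH, hV, hFe⟩ := hF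
  have hFP : F ⊆ GCPoly n lam := by rw [hFe]; exact fun x hx => hx.1
  ext x
  constructor
  · rintro ⟨hx, h⟩
    rw [hFe]
    refine ⟨hx, ?_, ?_⟩
    · rintro ⟨i, j⟩ hp
      refine ((h i j (hH hp)).1 fun hm => ?_).symm
      obtain ⟨y, hy, hlt⟩ := (memH (hH hp)).1 hm
      rw [hFe] at hy
      exact hlt.ne' (hy.2.1 _ hp)
    · rintro ⟨i, j⟩ hp
      refine (h i j (hV hp)).2 fun hm => ?_
      obtain ⟨y, hy, hlt⟩ := (memV (hV hp)).1 hm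
      rw [hFe] at hy
      exact hlt.ne' (hy.2.2 _ hp)
  · intro hx
    refine ⟨hFP hx, fun i j hij => ⟨fun hm => ?_, fun hm => ?_⟩⟩
    · by_contra hne
      exact hm ((memH hij).2 ⟨x, hx, lt_of_le_of_ne (hFP hx i j hij).1 hne⟩)
    · by_contra hne
      exact hm ((memV hij).2 ⟨x, hx, lt_of_le_of_ne (hFP hx i j hij).2 (Ne.symm hne)⟩)

theorem psi_face {n : ℕ} {lam : ℕ → ℝ} {γ : LGraph} (h : (psiGC n lam γ).Nonempty) :
    IsGCFace n lam (psiGC n lam γ) := by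
  refine ⟨h, {p | p ∈ GCIdx n ∧ ((p.1 - 1, p.2), (p.1, p.2)) ∉ γ.E},
    {p | p ∈ GCIdx n ∧ ((p.1, p.2 - 1), (p.1, p.2)) ∉ γ.E}, fun p hp => hp.1,
    fun p hp => hp.1, ?_⟩
  ext x
  constructor
  · rintro ⟨hx, h⟩
    exact ⟨hx, fun p hp => ((h p.1 p.2 hp.1).1 hp.2).symm, fun p hp => (h p.1 p.2 hp.1).2 hp.2⟩
  · rintro ⟨hx, h1, h2⟩
    exact ⟨hx, fun i j hij => ⟨fun hm => (h1 (i, j) ⟨hij, hm⟩).symm,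
      fun hm => h2 (i, j) ⟨hij, hm⟩⟩⟩

theorem barX_props {s : ℕ} {k : ℕ → ℕ} {lam : ℕ → ℝ} (hlam : HasBlockStructure s k lam)
    {E : Set ((ℕ × ℕ) × (ℕ × ℕ))} (hE : LocFace s k E) (d : ℕ) :
    ∀ i j, 1 ≤ i → 1 ≤ j → i + j + d = nseq k s →
    (barX (nseq k s) lam E (i + 1) j ≤ barX (nseq k s) lam E i j ∧
     barX (nseq k s) lam E i j ≤ barX (nseq k s) lam E i (j + 1)) ∧
    (barX (nseq k s) lam E (i + 1) j < barX (nseq k s) lam E i j ↔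
      ((i, j - 1), (i, j)) ∈ E) ∧
    (barX (nseq k s) lam E i j < barX (nseq k s) lam E i (j + 1) ↔
      ((i - 1, j), (i, j)) ∈ E) := by
  have hst := fun u v h => (hE.step u v h).1
  have main : ∀ i j, 1 ≤ i → 1 ≤ j → i + j ≤ nseq k s →
      (barX (nseq k s) lam E (i + 1) j ≤ barX (nseq k s) lam E i (j + 1) ∧
       (barX (nseq k s) lam E (i + 1) j < barX (nseq k s) lam E i (j + 1) ↔
         ∃ u, (u, (i, j)) ∈ E)) →
    (barX (nseq k s) lam E (i + 1) j ≤ barX (nseq k s) lam E i j ∧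
     barX (nseq k s) lam E i j ≤ barX (nseq k s) lam E i (j + 1)) ∧
    (barX (nseq k s) lam E (i + 1) j < barX (nseq k s) lam E i j ↔
      ((i, j - 1), (i, j)) ∈ E) ∧
    (barX (nseq k s) lam E i j < barX (nseq k s) lam E i (j + 1) ↔
      ((i - 1, j), (i, j)) ∈ E) := by
    intro i j hi hj hij ⟨h1, h2⟩
    rw [in_iff hst hi hj] at h2
    have hb := barX.eq_1 (nseq k s) lam E i j
    rw [dif_neg (by omega)] at hb
    by_cases c1 : ((i - 1, j), (i, j)) ∈ E <;> by_cases c2 : ((i, j - 1), (i, j)) ∈ E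
    · rw [dif_pos c1, dif_pos c2] at hb
      have := h2.2 (Or.inl c1)
      simp only [c1, c2, iff_true]
      refine ⟨⟨?_, ?_⟩, ?_, ?_⟩ <;> linarith
    · rw [dif_pos c1, dif_neg c2] at hb
      have := h2.2 (Or.inl c1)
      simp only [c1, c2, iff_true, iff_false]
      refine ⟨⟨?_, ?_⟩, ?_, ?_⟩ <;> linarith
    · rw [dif_neg c1] at hb
      have := h2.2 (Or.inr c2)
      simp only [c1, c2, iff_true, iff_false]
      refine ⟨⟨?_, ?_⟩, ?_, ?_⟩ <;> linarith
    · rw [dif_neg c1] at hb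
      have : ¬ _ := fun h => not_or.2 ⟨c1, c2⟩ (h2.1 h)
      simp only [c1, c2, iff_false]
      refine ⟨⟨?_, ?_⟩, ?_, ?_⟩ <;> linarith
  induction d with
  | zero =>
    intro i j hi hj hij
    refine main i j hi hj (by omega) ?_
    have e1 : barX (nseq k s) lam E (i + 1) j = lam (i + 1) := by
      rw [barX.eq_1, dif_pos (by omega)]
    have e2 : barX (nseq k s) lam E i (j + 1) = lam i := by
      rw [barX.eq_1, dif_pos (by omega)]
    rw [e1, e2, hE.term i j hi hj (by omega)]
    exact lam_facts s k lam hlam i j hi hj (by omega)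
  | succ d ih =>
    intro i j hi hj hij
    refine main i j hi hj (by omega) ?_
    obtain ⟨⟨a1, a2⟩, a3, a4⟩ := ih (i + 1) j (by omega) hj (by omega)
    obtain ⟨⟨b1, b2⟩, b3, b4⟩ := ih i (j + 1) hi (by omega) (by omega)
    simp only [Nat.add_sub_cancel] at a4 b3
    rw [hE.bal i j hi hj (by omega), out_iff hst, ← a4, ← b3]
    refine ⟨a2.trans b1, fun h => ?_, ?_⟩
    · rcases lt_or_ge (barX (nseq k s) lam E (i + 1) j)
        (barX (nseq k s) lam E (i + 1) (j + 1)) with h' | h'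
      · exact Or.inl h'
      · exact Or.inr (by linarith)
    · rintro (h | h) <;> linarith

theorem exists_gen {s : ℕ} {k : ℕ → ℕ} {lam : ℕ → ℝ} (hlam : HasBlockStructure s k lam)
    {γ : LGraph} (hE : LocFace s k γ.E) :
    ∃ x ∈ psiGC (nseq k s) lam γ, ∀ i j, (i, j) ∈ GCIdx (nseq k s) →
      ((((i - 1, j), (i, j)) ∈ γ.E →
        gcEntry (nseq k s) lam x (i, j) < gcEntry (nseq k s) lam x (i, j + 1)) ∧
      (((i, j - 1), (i, j)) ∈ γ.E →
        gcEntry (nseq k s) lam x (i + 1, j) < gcEntry (nseq k s) lam x (i, j))) := by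
  let x : GCIdx (nseq k s) → ℝ := fun p => barX (nseq k s) lam γ.E p.1.1 p.1.2
  have hx : ∀ i j, 1 ≤ i → 1 ≤ j →
      gcEntry (nseq k s) lam x (i, j) = barX (nseq k s) lam γ.E i j := by
    intro i j hi hj
    by_cases h : i + j ≤ nseq k s
    · rw [gcEntry, dif_pos ⟨hi, hj, h⟩]
    · rw [gcEntry_bdry (by omega), barX.eq_1, dif_pos (by omega)]
  have hp : ∀ i j, (i, j) ∈ GCIdx (nseq k s) → _ := fun i j h =>
    barX_props hlam hE (nseq k s - (i + j)) i j h.1 h.2.1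
      (by have := h.2.2; simp only at this; omega)
  refine ⟨x, ⟨?_, ?_⟩, ?_⟩ <;> intro i j hij <;> have h1 : 1 ≤ i := hij.1 <;>
    have h2 : 1 ≤ j := hij.2.1 <;> rw [hx i j h1 h2, hx (i + 1) j (by omega) h2,
      hx i (j + 1) h1 (by omega)] <;> obtain ⟨⟨a1, a2⟩, a3, a4⟩ := hp i j hij
  · exact ⟨a2, a1⟩
  · refine ⟨fun h => ?_, fun h => ?_⟩
    · by_contra hne
      exact h (a4.1 (lt_of_le_of_ne a2 hne))
    · by_contra hne
      exact h (a3.1 (lt_of_le_of_ne a1 (Ne.symm hne)))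
  · exact ⟨a4.2, a3.2⟩

theorem phi_psi_E {s : ℕ} {k : ℕ → ℕ} {lam : ℕ → ℝ} (hlam : HasBlockStructure s k lam)
    {γ : LGraph} (hE : LocFace s k γ.E) :
    phiE (nseq k s) lam (psiGC (nseq k s) lam γ) = γ.E := by
  obtain ⟨x, hx, hgen⟩ := exists_gen hlam hE
  ext ⟨u, v⟩
  constructor
  · rintro (⟨a, ha, he | he⟩ | ⟨a, b, hab, he, y, hy, hlt⟩ | ⟨a, b, hab, he, y, hy, hlt⟩)
    · rw [he]; exact (hE.axis a ha).1
    · rw [he]; exact (hE.axis a ha).2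
    · rw [he]
      by_contra hm
      exact hlt.ne ((hy.2 a b hab).1 hm)
    · rw [he]
      by_contra hm
      exact hlt.ne' ((hy.2 a b hab).2 hm)
  · intro he
    obtain ⟨hg, hs⟩ := hE.step _ _ he
    obtain ⟨a, b⟩ := u
    obtain ⟨c, d⟩ := v
    simp only [gridStep, Prod.mk.injEq] at hg hs
    rcases hg with ⟨rfl, rfl⟩ | ⟨rfl, rfl⟩
    · rcases Nat.eq_zero_or_pos d with rfl | hd
      · exact Or.inl ⟨a, by omega, Or.inr rfl⟩
      · have g : (a + 1, d) ∈ GCIdx (nseq k s) := ⟨by simp, hd, hs⟩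
        exact Or.inr (Or.inl ⟨a + 1, d, g, rfl, x, hx, (hgen _ _ g).1 he⟩)
    · rcases Nat.eq_zero_or_pos c with rfl | hd
      · exact Or.inl ⟨b, by omega, Or.inl rfl⟩
      · have g : (c, b + 1) ∈ GCIdx (nseq k s) := ⟨hd, by simp, hs⟩
        exact Or.inr (Or.inr ⟨c, b + 1, g, rfl, x, hx, (hgen _ _ g).2 he⟩)


/-- Lemma 2.6. The map `φ` from faces of the Gelfand–Cetlin
polytope `P_λ` to faces of the ladder diagram `Γ_k` is a bijection with
inverse `ψ`. -/
theorem phiGC_bijective (s : ℕ) (hs : 1 ≤ s) (k : ℕ → ℕ) (hk : ∀ i < s, 0 < k i)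
    (lam : ℕ → ℝ) (hlam : HasBlockStructure s k lam) :
    (∀ F : Set (GCIdx (nseq k s) → ℝ), IsGCFace (nseq k s) lam F →
      IsLadderFace s k (phiGC (nseq k s) lam F) ∧
      psiGC (nseq k s) lam (phiGC (nseq k s) lam F) = F) ∧
    (∀ γ : LGraph, IsLadderFace s k γ →
      IsGCFace (nseq k s) lam (psiGC (nseq k s) lam γ) ∧
      phiGC (nseq k s) lam (psiGC (nseq k s) lam γ) = γ) := by
  have hn := nseq_pos s hs k hk
  constructor
  · intro F hF
    refine ⟨loc_face hn (phi_loc hlam hF.1 ?_), psi_phi hF⟩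
    obtain ⟨_, SH, SV, _, _, hFe⟩ := hF
    rw [hFe]
    exact fun x hx => hx.1
  · intro γ hγ
    obtain ⟨hE, hV⟩ := face_loc hn hγ
    obtain ⟨x, hx, _⟩ := exists_gen hlam hE
    refine ⟨psi_face ⟨x, hx⟩, LGraph.ext ?_ (phi_psi_E hlam hE)⟩
    rw [hV, ← phi_psi_E hlam hE]
    rfl
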